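/- There exists a constant c > 0 such that for any arrangement of n closed geodesics on the flat 2-torus with f complementary regions satisfying f ≤ c·n^{6/5}, the maximal number m of pairwise parallel geodesics in the arrangement satisfies m ≥ n − f/n + O(1), i.e., there is a constant C with m ≥ n − f/n − C for all n. -/

import Mathlib

noncomputable section

/-- The flat two-dimensional torus `ℝ²/ℤ²`. -/
abbrev Torus : Type := AddCircle (1 : ℝ) × AddCircle (1 : ℝ)

/-- The quotient projection `ℝ² → ℝ²/ℤ²`. -/
def torusProj (v : ℝ × ℝ) : Torus :=
  ((v.1 : AddCircle (1 : ℝ)), (v.2 : AddCircle (1 : ℝ)))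

/-- A vector `(p, q) ∈ ℤ²` is primitive if `gcd(p, q) = 1`. -/
def IsPrimitive (v : ℤ × ℤ) : Prop := Int.gcd v.1 v.2 = 1

/-- The closed geodesic on the torus through (the class of) `b` in direction `v`. -/
def geodesic (b : ℝ × ℝ) (v : ℤ × ℤ) : Set Torus :=
  Set.range (fun t : ℝ => torusProj (b.1 + t * (v.1 : ℝ), b.2 + t * (v.2 : ℝ)))

/-- The number of connected components of the complement of `S`. -/
def regionCount {X : Type*} [TopologicalSpace X] (S : Set X) : ℕ :=
  Nat.card (ConnectedComponents ↥(Sᶜ))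

/-- An arrangement of `n` distinct closed geodesics, given by base points `b`
and primitive direction vectors `v`. -/
def IsArrangement {n : ℕ} (b : Fin n → ℝ × ℝ) (v : Fin n → ℤ × ℤ) : Prop :=
  (∀ i, IsPrimitive (v i)) ∧ Function.Injective (fun i => geodesic (b i) (v i))

/-- Two geodesics are parallel iff their homology classes agree up to sign. -/
def Parallel (v w : ℤ × ℤ) : Prop := v = w ∨ v = -w


namespace TorusArr

/-- Pairing of an integer covector with a real vector. -/
def dot (w : ℤ × ℤ) (x : ℝ × ℝ) : ℝ := (w.1 : ℝ) * x.1 + (w.2 : ℝ) * x.2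

lemma dot_continuous (w : ℤ × ℤ) : Continuous (dot w) := by
  unfold dot; fun_prop

lemma coe_eq_coe_iff (a b : ℝ) :
    ((a : AddCircle (1 : ℝ)) = (b : AddCircle (1 : ℝ))) ↔ ∃ k : ℤ, a = b + k := by
  rw [← sub_eq_zero, ← AddCircle.coe_sub, AddCircle.coe_eq_zero_iff]
  constructor
  · rintro ⟨k, hk⟩
    refine ⟨k, ?_⟩
    simp at hk; linarith
  · rintro ⟨k, hk⟩
    refine ⟨k, ?_⟩
    simp; linarith

lemma torusProj_eq_iff (x y : ℝ × ℝ) :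
    torusProj x = torusProj y ↔ ∃ z : ℤ × ℤ, x.1 = y.1 + z.1 ∧ x.2 = y.2 + z.2 := by
  unfold torusProj
  rw [Prod.mk.injEq, coe_eq_coe_iff, coe_eq_coe_iff]
  constructor
  · rintro ⟨⟨k, hk⟩, ⟨l, hl⟩⟩
    exact ⟨(k, l), hk, hl⟩
  · rintro ⟨z, h1, h2⟩
    exact ⟨⟨_, h1⟩, ⟨_, h2⟩⟩

lemma torusProj_continuous : Continuous torusProj := by
  unfold torusProj
  exact ((AddCircle.continuous_mk' 1).comp continuous_fst).prodMk
    ((AddCircle.continuous_mk' 1).comp continuous_snd)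

lemma torusProj_isOpenMap : IsOpenMap torusProj := by
  have h : IsOpenMap (fun a : ℝ => (a : AddCircle (1 : ℝ))) := QuotientAddGroup.isOpenMap_coe
  exact h.prodMap h

lemma torusProj_surj (y : Torus) :
    ∃ x : ℝ × ℝ, torusProj x = y ∧ x.1 ∈ Set.Icc (0 : ℝ) 1 ∧ x.2 ∈ Set.Icc (0 : ℝ) 1 := by
  obtain ⟨y1, y2⟩ := y
  obtain ⟨a, rfl⟩ := QuotientAddGroup.mk_surjective y1
  obtain ⟨b, rfl⟩ := QuotientAddGroup.mk_surjective y2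
  refine ⟨(Int.fract a, Int.fract b), ?_, ⟨Int.fract_nonneg _, (Int.fract_lt_one _).le⟩,
    ⟨Int.fract_nonneg _, (Int.fract_lt_one _).le⟩⟩
  change torusProj _ = torusProj (a, b)
  rw [torusProj_eq_iff]
  refine ⟨(-⌊a⌋, -⌊b⌋), ?_, ?_⟩
  · simp [Int.fract, sub_eq_add_neg]
  · simp [Int.fract, sub_eq_add_neg]

lemma mem_geodesic_iff (b : ℝ × ℝ) (v : ℤ × ℤ) (hv : IsPrimitive v) (x : ℝ × ℝ) :
    torusProj x ∈ geodesic b v ↔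
      ∃ k : ℤ, dot (v.2, -v.1) x - dot (v.2, -v.1) b = k := by
  unfold geodesic dot
  constructor
  · rintro ⟨t, ht⟩
    obtain ⟨z, h1, h2⟩ := (torusProj_eq_iff _ _).1 ht
    refine ⟨-(v.2 * z.1 - v.1 * z.2), ?_⟩
    push_cast
    simp only at h1 h2
    have e1 : x.1 = b.1 + t * v.1 - z.1 := by linarith
    have e2 : x.2 = b.2 + t * v.2 - z.2 := by linarith
    rw [e1, e2]; ring
  · rintro ⟨k, hk⟩
    have hc : IsCoprime v.1 v.2 := Int.isCoprime_iff_gcd_eq_one.2 hv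
    obtain ⟨r, s, hrs⟩ := hc
    have hrs' : (r : ℝ) * v.1 + s * v.2 = 1 := by exact_mod_cast hrs
    push_cast at hk
    -- integer vector z = k (s, -r) with w·z = k
    have hN : (v.1 : ℝ) ^ 2 + (v.2 : ℝ) ^ 2 ≠ 0 := by
      intro h
      have h1 : (v.1 : ℝ) = 0 := by nlinarith [sq_nonneg (v.1 : ℝ), sq_nonneg (v.2 : ℝ)]
      have h2 : (v.2 : ℝ) = 0 := by nlinarith [sq_nonneg (v.1 : ℝ), sq_nonneg (v.2 : ℝ)]
      rw [h1, h2] at hrs'; simp at hrs'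
    set X : ℝ := x.1 - k * s - b.1 with hX
    set Y : ℝ := x.2 + k * r - b.2 with hY
    have hXY : (v.2 : ℝ) * X - v.1 * Y = 0 := by
      rw [hX, hY]; linear_combination hk - (k : ℝ) * hrs'
    refine ⟨(X * v.1 + Y * v.2) / ((v.1 : ℝ) ^ 2 + (v.2 : ℝ) ^ 2), ?_⟩
    simp only
    rw [torusProj_eq_iff]
    refine ⟨(-(k * s), k * r), ?_, ?_⟩
    · simp only; push_cast
      have : (X * v.1 + Y * v.2) / ((v.1 : ℝ) ^ 2 + (v.2 : ℝ) ^ 2) * v.1 = X := by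
        field_simp; linear_combination (-(v.2 : ℝ)) * hXY
      rw [this, hX]; ring
    · simp only; push_cast
      have : (X * v.1 + Y * v.2) / ((v.1 : ℝ) ^ 2 + (v.2 : ℝ) ^ 2) * v.2 = Y := by
        field_simp; linear_combination (v.1 : ℝ) * hXY
      rw [this, hY]; ring

section Abstract

set_option linter.unusedSectionVars false

variable {ι : Type} [Fintype ι] (w : ι → ℤ × ℤ) (β : ι → ℝ)

/-- Floor pattern. -/
def pat (x : ℝ × ℝ) : ι → ℤ := fun i => ⌊dot (w i) x - β i⌋

/-- Points off all the lines. -/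
def off (x : ℝ × ℝ) : Prop := ∀ i, ∀ k : ℤ, dot (w i) x - β i ≠ k

lemma off_iff (x : ℝ × ℝ) : off w β x ↔
    ∀ i, (pat w β x i : ℝ) < dot (w i) x - β i ∧ dot (w i) x - β i < pat w β x i + 1 := by
  constructor
  · intro h i
    exact ⟨lt_of_le_of_ne (Int.floor_le _) (h i _).symm, Int.lt_floor_add_one _⟩
  · intro h i k hk
    have := h i
    simp only [pat, hk, Int.floor_intCast] at this
    exact lt_irrefl _ this.1

lemma off_of_between (x : ℝ × ℝ) (c : ι → ℤ)
    (h : ∀ i, (c i : ℝ) < dot (w i) x - β i ∧ dot (w i) x - β i < c i + 1) :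
    off w β x ∧ pat w β x = c := by
  have hp : pat w β x = c := by
    funext i
    exact Int.floor_eq_iff.2 ⟨(h i).1.le, (h i).2⟩
  refine ⟨?_, hp⟩
  rw [off_iff, hp]; exact h

lemma isOpen_pat (E : Set (ι → ℤ)) : IsOpen {x | off w β x ∧ pat w β x ∈ E} := by
  rw [isOpen_iff_mem_nhds]
  rintro x ⟨hx, hE⟩
  have hx' := (off_iff w β x).1 hx
  have : ∀ᶠ y in nhds x, ∀ i, ((pat w β x i : ℤ) : ℝ) < dot (w i) y - β i ∧
      dot (w i) y - β i < pat w β x i + 1 := by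
    rw [Filter.eventually_all]
    intro i
    have hc : Continuous (fun y => dot (w i) y - β i) := (dot_continuous _).sub continuous_const
    exact (hc.continuousAt.eventually (lt_mem_nhds (hx' i).1)).and
      (hc.continuousAt.eventually (gt_mem_nhds (hx' i).2))
  filter_upwards [this] with y hy
  obtain ⟨h1, h2⟩ := off_of_between w β y _ hy
  exact ⟨h1, by rw [h2]; exact hE⟩

lemma pat_add (x y : ℝ × ℝ) (z : ℤ × ℤ) (h1 : x.1 = y.1 + z.1) (h2 : x.2 = y.2 + z.2) (i : ι) :
    pat w β x i = pat w β y i + ((w i).1 * z.1 + (w i).2 * z.2) := by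
  unfold pat dot
  rw [← Int.floor_add_intCast, h1, h2]
  congr 1
  push_cast; ring

lemma mem_compl_iff_off {S : Set Torus}
    (hS : ∀ x, torusProj x ∈ S ↔ ∃ i, ∃ k : ℤ, dot (w i) x - β i = k) (x : ℝ × ℝ) : torusProj x ∈ Sᶜ ↔ off w β x := by
  rw [Set.mem_compl_iff, hS]; unfold off; push Not; rfl

lemma same_comp {S : Set Torus}
    (hS : ∀ x, torusProj x ∈ S ↔ ∃ i, ∃ k : ℤ, dot (w i) x - β i = k) (x y : ℝ × ℝ) (hx : off w β x) (hy : off w β y)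
    (h : pat w β x = pat w β y) (hx' : torusProj x ∈ Sᶜ) (hy' : torusProj y ∈ Sᶜ) :
    (ConnectedComponents.mk (⟨torusProj x, hx'⟩ : ↥Sᶜ)) =
      ConnectedComponents.mk (⟨torusProj y, hy'⟩ : ↥Sᶜ) := by
  have key : ∀ t : unitInterval,
      torusProj ((1 - (t : ℝ)) * x.1 + t * y.1, (1 - (t : ℝ)) * x.2 + t * y.2) ∈ Sᶜ := by
    intro t
    rw [mem_compl_iff_off w β hS]
    refine (off_of_between w β _ (pat w β x) ?_).1
    intro i
    have h1 := (off_iff w β x).1 hx i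
    have h2 := (off_iff w β y).1 hy i
    rw [← h] at h2
    have e : dot (w i) ((1 - (t : ℝ)) * x.1 + t * y.1, (1 - (t : ℝ)) * x.2 + t * y.2) - β i
        = (1 - (t : ℝ)) * (dot (w i) x - β i) + t * (dot (w i) y - β i) := by
      unfold dot; ring
    rw [e]
    have t0 := t.2.1
    have t1 := t.2.2
    rcases eq_or_lt_of_le t0 with h0 | h0
    · rw [← h0]; simpa using h1
    · constructor
      · nlinarith [mul_pos h0 (sub_pos.2 h2.1), mul_nonneg (sub_nonneg.2 t1) (sub_pos.2 h1.1).le]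
      · nlinarith [mul_pos h0 (sub_pos.2 h2.2), mul_nonneg (sub_nonneg.2 t1) (sub_pos.2 h1.2).le]
  let γ : unitInterval → ↥Sᶜ := fun t => ⟨_, key t⟩
  have hγ : Continuous γ := by
    refine Continuous.subtype_mk (torusProj_continuous.comp ?_) _
    fun_prop
  have hpre : IsPreconnected (Set.range γ) := isPreconnected_range hγ
  rw [ConnectedComponents.coe_eq_coe']
  refine hpre.subset_connectedComponent ?_ ?_
  · exact ⟨1, by simp [γ]⟩
  · exact ⟨0, by simp [γ]⟩

lemma finite_comp {S : Set Torus}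
    (hS : ∀ x, torusProj x ∈ S ↔ ∃ i, ∃ k : ℤ, dot (w i) x - β i = k) : Finite (ConnectedComponents ↥Sᶜ) := by
  have hlift : ∀ c : ConnectedComponents ↥Sᶜ, ∃ x : ℝ × ℝ, ∃ hx : torusProj x ∈ Sᶜ,
      ConnectedComponents.mk (⟨torusProj x, hx⟩ : ↥Sᶜ) = c ∧
      x.1 ∈ Set.Icc (0 : ℝ) 1 ∧ x.2 ∈ Set.Icc (0 : ℝ) 1 := by
    intro c
    obtain ⟨⟨y, hy⟩, rfl⟩ := ConnectedComponents.surjective_coe c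
    obtain ⟨x, rfl, h⟩ := torusProj_surj y
    exact ⟨x, hy, rfl, h⟩
  choose X hX hXc hX1 hX2 using hlift
  let B : ι → ℝ := fun i => |((w i).1 : ℝ)| + |((w i).2 : ℝ)| + |β i|
  have hB : ∀ c i, |dot (w i) (X c) - β i| ≤ B i := by
    intro c i
    have a1 : |(X c).1| ≤ 1 := abs_le.2 ⟨by linarith [(hX1 c).1], (hX1 c).2⟩
    have a2 : |(X c).2| ≤ 1 := abs_le.2 ⟨by linarith [(hX2 c).1], (hX2 c).2⟩
    unfold dot
    calc _ ≤ |((w i).1 : ℝ) * (X c).1 + (w i).2 * (X c).2| + |β i| := abs_sub _ _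
      _ ≤ |((w i).1 : ℝ) * (X c).1| + |((w i).2 : ℝ) * (X c).2| + |β i| := by
          gcongr; exact abs_add_le _ _
      _ ≤ _ := by
          rw [abs_mul, abs_mul]
          have := mul_le_mul_of_nonneg_left a1 (abs_nonneg ((w i).1 : ℝ))
          have := mul_le_mul_of_nonneg_left a2 (abs_nonneg ((w i).2 : ℝ))
          simp only [B]; linarith
  let F : ConnectedComponents ↥Sᶜ → (∀ i : ι, Set.Icc (⌊-(B i)⌋) (⌊B i⌋)) := fun c i =>
    ⟨pat w β (X c) i, Int.floor_mono (abs_le.1 (hB c i)).1, Int.floor_mono (abs_le.1 (hB c i)).2⟩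
  refine Finite.of_injective F ?_
  intro c c' h
  rw [← hXc c, ← hXc c']
  refine same_comp w β hS _ _ ((mem_compl_iff_off w β hS _).1 (hX c))
    ((mem_compl_iff_off w β hS _).1 (hX c')) ?_ _ _
  funext i
  have := congrFun h i
  exact congrArg Subtype.val this

lemma card_le_regionCount {S : Set Torus}
    (hS : ∀ x, torusProj x ∈ S ↔ ∃ i, ∃ k : ℤ, dot (w i) x - β i = k) {J : Type} [Fintype J] (x : J → ℝ × ℝ) (hx : ∀ j, off w β (x j))
    (hinj : ∀ j j', ∀ z : ℤ × ℤ,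
      (∀ i, pat w β (x j) i = pat w β (x j') i + ((w i).1 * z.1 + (w i).2 * z.2)) → j = j') :
    Fintype.card J ≤ regionCount S := by
  have hfin := finite_comp w β hS
  unfold regionCount
  rw [← Nat.card_eq_fintype_card]
  refine Nat.card_le_card_of_injective
    (fun j => ConnectedComponents.mk (⟨torusProj (x j), (mem_compl_iff_off w β hS _).2 (hx j)⟩ : ↥Sᶜ)) ?_
  intro j' j hjj
  simp only at hjj
  rw [ConnectedComponents.coe_eq_coe'] at hjj
  symm
  let U : Set ↥Sᶜ := Set.preimage Subtype.val
    (Set.image torusProj {y | off w β y ∧ pat w β y ∈ ({pat w β (x j)} : Set (ι → ℤ))})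
  let E : Set (ι → ℤ) := {c | ∀ z : ℤ × ℤ, ¬ ∀ i, pat w β (x j) i = c i + ((w i).1 * z.1 + (w i).2 * z.2)}
  have hUc : Uᶜ = Set.preimage Subtype.val (Set.image torusProj {y | off w β y ∧ pat w β y ∈ E}) := by
    ext ⟨y, hy⟩
    obtain ⟨y, rfl, -⟩ := torusProj_surj y
    have hyo := (mem_compl_iff_off w β hS _).1 hy
    constructor
    · intro hn
      refine ⟨y, ⟨hyo, ?_⟩, rfl⟩
      intro z hz
      apply hn
      have hp : torusProj (y.1 + z.1, y.2 + z.2) = torusProj y :=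
        (torusProj_eq_iff _ _).2 ⟨z, rfl, rfl⟩
      refine ⟨(y.1 + z.1, y.2 + z.2), ⟨?_, ?_⟩, hp⟩
      · rw [← mem_compl_iff_off w β hS, hp]; exact hy
      · funext i
        rw [pat_add w β _ y z rfl rfl, hz i]
    · rintro ⟨y', ⟨ho, hE⟩, hp⟩ ⟨y'', ⟨ho', hE'⟩, hp'⟩
      simp only at hp hp'
      rw [← hp, torusProj_eq_iff] at hp'
      obtain ⟨z, h1, h2⟩ := hp'
      apply hE z
      intro i
      have := pat_add w β _ _ z h1 h2 i
      rw [Set.mem_singleton_iff] at hE'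
      rw [← hE', this]
  have hU : IsClopen U := by
    constructor
    · rw [← isOpen_compl_iff, hUc]
      exact (torusProj_isOpenMap _ (isOpen_pat w β E)).preimage continuous_subtype_val
    · exact (torusProj_isOpenMap _ (isOpen_pat w β _)).preimage continuous_subtype_val
  have hmem : (⟨torusProj (x j), (mem_compl_iff_off w β hS _).2 (hx j)⟩ : ↥Sᶜ) ∈ U :=
    ⟨x j, ⟨hx j, rfl⟩, rfl⟩
  obtain ⟨y, ⟨ho, hE⟩, hp⟩ := hU.connectedComponent_subset hmem hjj
  simp only at hp
  rw [torusProj_eq_iff] at hp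
  obtain ⟨z, h1, h2⟩ := hp
  apply hinj j j' z
  intro i
  rw [Set.mem_singleton_iff] at hE
  rw [← hE]
  exact pat_add w β _ _ z h1 h2 i

end Abstract

lemma prim_parallel (v w : ℤ × ℤ) (hv : IsPrimitive v) (hw : IsPrimitive w)
    (h : v.1 * w.2 - v.2 * w.1 = 0) : w = v ∨ w = -v := by
  obtain ⟨r, s, hrs⟩ : IsCoprime v.1 v.2 := Int.isCoprime_iff_gcd_eq_one.2 hv
  obtain ⟨r', s', hrs'⟩ : IsCoprime w.1 w.2 := Int.isCoprime_iff_gcd_eq_one.2 hw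
  have h1 : w.1 = v.1 * (r * w.1 + s * w.2) := by linear_combination (-w.1) * hrs - s * h
  have h2 : w.2 = v.2 * (r * w.1 + s * w.2) := by linear_combination (-w.2) * hrs + r * h
  have hu : IsUnit (r * w.1 + s * w.2) := by
    refine IsUnit.of_mul_eq_one (r' * v.1 + s' * v.2) ?_
    linear_combination hrs' - r' * h1 - s' * h2
  rcases Int.isUnit_iff.1 hu with e | e
  · left; rw [e] at h1 h2; ext <;> simp [h1, h2]
  · right; rw [e] at h1 h2; ext
    · simp; linarith
    · simp; linarith

lemma ev_floor (δ c : ℝ) (hc : 0 < c) : ∀ᶠ ε in nhdsWithin (0 : ℝ) (Set.Ioi 0),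
    ((⌊δ⌋ : ℤ) : ℝ) < δ + ε * c ∧ δ + ε * c < ⌊δ⌋ + 1 := by
  have h1 : ∀ᶠ ε in nhdsWithin (0 : ℝ) (Set.Ioi 0), (0 : ℝ) < ε := self_mem_nhdsWithin
  have h2 : ∀ᶠ ε in nhdsWithin (0 : ℝ) (Set.Ioi 0), δ + ε * c < ⌊δ⌋ + 1 := by
    apply nhdsWithin_le_nhds
    have hcont : Continuous (fun ε : ℝ => δ + ε * c) := by fun_prop
    refine hcont.continuousAt.eventually (gt_mem_nhds ?_)
    simp
  filter_upwards [h1, h2] with ε e1 e2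
  exact ⟨by nlinarith [Int.floor_le δ, mul_pos e1 hc], e2⟩

lemma count_le {ι : Type} [Fintype ι] [DecidableEq ι] (w : ι → ℤ × ℤ) (β : ι → ℝ) {S : Set Torus}
    (hS : ∀ x, torusProj x ∈ S ↔ ∃ i, ∃ k : ℤ, dot (w i) x - β i = k)
    (hprim : ∀ i, IsPrimitive (w i))
    (hdist : ∀ i i', i ≠ i' → w i = w i' → ∀ k : ℤ, β i - β i' ≠ k)
    (P : Finset ι) (u : ℤ × ℤ) (hu : IsPrimitive u)
    (hP : ∀ i ∈ P, w i = (u.2, -u.1))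
    (d : ι → ℕ) (hd : ∀ i, (d i : ℤ) = (w i).1 * u.1 + (w i).2 * u.2)
    (hdpos : ∀ i, i ∉ P → 0 < d i) :
    P.card * ∑ h ∈ Pᶜ, d h ≤ regionCount S := by
  obtain ⟨r, s, hrs⟩ : IsCoprime u.1 u.2 := Int.isCoprime_iff_gcd_eq_one.2 hu
  have hrs' : (r : ℝ) * u.1 + s * u.2 = 1 := by exact_mod_cast hrs
  have hdR : ∀ i, (d i : ℝ) = ((w i).1 : ℝ) * u.1 + (w i).2 * u.2 := fun i => by
    exact_mod_cast hd i
  -- `e = (s, -r)` satisfies `w0 · e = 1`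
  let eh : ι → ℤ := fun i => (w i).1 * s - (w i).2 * r
  have ehP : ∀ i ∈ P, eh i = 1 := by
    intro i hi; simp only [eh, hP i hi]; linarith
  have dP : ∀ i ∈ P, d i = 0 := by
    intro i hi; have := hd i; rw [hP i hi] at this; simp only at this
    have : (d i : ℤ) = 0 := by rw [this]; ring
    exact_mod_cast this
  let pt : ℝ → ℝ → ℝ × ℝ := fun σ t => (σ * s + t * u.1, -σ * r + t * u.2)
  have hpt : ∀ i σ t, dot (w i) (pt σ t) - β i = σ * eh i - β i + t * d i := by
    intro i σ t
    simp only [dot, pt, eh, hdR]; push_cast; ring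
  -- bad parameters
  let bad : Set ℝ := {ε | ∃ j ∈ P, ∃ h h', h ∉ P ∧ h' ∉ P ∧ h ≠ h' ∧ ∃ t : ℝ, ∃ a a' : ℤ,
    (β j + ε) * eh h - β h + t * d h = a ∧ (β j + ε) * eh h' - β h' + t * d h' = a'}
  have hbad : bad.Countable := by
    let f : ι × ι × ι × ℤ × ℤ → ℝ := fun q =>
      ((q.2.2.2.1 + β q.2.1) * d q.2.2.1 - (q.2.2.2.2 + β q.2.2.1) * d q.2.1) /
        ((eh q.2.1 : ℝ) * d q.2.2.1 - eh q.2.2.1 * d q.2.1) - β q.1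
    refine (Set.countable_range f).mono ?_
    rintro ε ⟨j, hj, h, h', hh, hh', hne, t, a, a', e1, e2⟩
    refine ⟨(j, h, h', a, a'), ?_⟩
    simp only [f]
    have hK : ((eh h : ℝ) * d h' - eh h' * d h) ≠ 0 := by
      intro hK
      have hK' : (eh h : ℤ) * d h' - eh h' * d h = 0 := by exact_mod_cast hK
      have hdet : (w h).1 * (w h').2 - (w h).2 * (w h').1 = 0 := by
        rw [hd, hd] at hK'
        simp only [eh] at hK'
        linear_combination hK' - ((w h).1 * (w h').2 - (w h).2 * (w h').1) * hrs
      rcases prim_parallel _ _ (hprim h) (hprim h') hdet with e | e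
      · have hb := hdist h h' hne e.symm (a' - a)
        apply hb
        have ehe : eh h' = eh h := by simp only [eh, e]
        have de : (d h' : ℝ) = d h := by rw [hdR, hdR, e]
        rw [ehe, de] at e2
        push_cast; linarith
      · have p1 := hdpos h hh
        have p2 := hdpos h' hh'
        have q1 := hd h
        have q2 := hd h'
        rw [e] at q2
        simp only [Prod.fst_neg, Prod.snd_neg] at q2
        have : (d h : ℤ) + d h' = 0 := by rw [q1, q2]; ring
        omega
    rw [sub_eq_iff_eq_add, div_eq_iff hK]
    linear_combination (-(d h' : ℝ)) * e1 + (d h : ℝ) * e2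
  -- choice of ε
  obtain ⟨ε, hε0, hεb, hεf⟩ : ∃ ε : ℝ, 0 < ε ∧ ε ∉ bad ∧ ∀ j ∈ P, ∀ i ∈ P,
      ((⌊β j - β i⌋ : ℤ) : ℝ) < β j - β i + ε * 1 ∧ β j - β i + ε * 1 < ⌊β j - β i⌋ + 1 := by
    have hev : ∀ᶠ ε in nhdsWithin (0 : ℝ) (Set.Ioi 0), ∀ j ∈ P, ∀ i ∈ P,
      ((⌊β j - β i⌋ : ℤ) : ℝ) < β j - β i + ε * 1 ∧ β j - β i + ε * 1 < ⌊β j - β i⌋ + 1 := by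
      rw [Filter.eventually_all_finset]; intro j _
      rw [Filter.eventually_all_finset]; intro i _
      exact ev_floor _ _ one_pos
    obtain ⟨ε0, h0, hsub⟩ := mem_nhdsGT_iff_exists_Ioo_subset.1 hev
    have hnc : ¬ (Set.Ioo (0 : ℝ) ε0).Countable := by
      rw [← Cardinal.le_aleph0_iff_set_countable, Cardinal.mk_Ioo_real h0]
      exact not_le.2 Cardinal.aleph0_lt_continuum
    have : ¬ Set.Ioo (0 : ℝ) ε0 ⊆ bad := fun h => hnc (hbad.mono h)
    obtain ⟨ε, hm, hn⟩ := Set.not_subset.1 this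
    exact ⟨ε, hm.1, hn, hsub hm⟩
  -- crossing times
  let τ : ι → ι → ℕ → ℝ := fun j h a => (a + β h - (β j + ε) * eh h) / d h
  have hτ : ∀ j h a, h ∉ P → (β j + ε) * eh h - β h + τ j h a * d h = a := by
    intro j h a hh
    have : (d h : ℝ) ≠ 0 := by exact_mod_cast (hdpos h hh).ne'
    simp only [τ]; field_simp; ring
  have hη : ∀ j ∈ P, ∀ t : ℝ, ∃ t', off w β (pt (β j + ε) t') ∧
      pat w β (pt (β j + ε) t') = pat w β (pt (β j + ε) t) := by
    intro j hj t
    have hev : ∀ᶠ η in nhdsWithin (0 : ℝ) (Set.Ioi 0), ∀ h ∈ Pᶜ,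
        ((⌊(β j + ε) * eh h - β h + t * d h⌋ : ℤ) : ℝ) < (β j + ε) * eh h - β h + t * d h + η * d h
        ∧ (β j + ε) * eh h - β h + t * d h + η * d h
          < ⌊(β j + ε) * eh h - β h + t * d h⌋ + 1 := by
      rw [Filter.eventually_all_finset]; intro h hh
      exact ev_floor _ _ (by exact_mod_cast hdpos h (Finset.mem_compl.1 hh))
    obtain ⟨η, hη⟩ := hev.exists
    refine ⟨t + η, off_of_between w β _ _ ?_⟩
    intro i
    simp only [pat, hpt]
    by_cases hi : i ∈ P
    · have := hεf j hj i hi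
      rw [ehP i hi, dP i hi]
      have hfl : ⌊(β j + ε) * ((1 : ℤ) : ℝ) - β i + t * ((0 : ℕ) : ℝ)⌋ = ⌊β j - β i⌋ := by
        rw [Int.floor_eq_iff]; push_cast; constructor <;> linarith [this.1, this.2]
      rw [hfl]; push_cast; constructor <;> linarith [this.1, this.2]
    · have := hη i (Finset.mem_compl.2 hi)
      rw [add_mul t η, ← add_assoc]; exact this
  choose! T hT1 hT2 using hη
  let J := (↥P) × (Σ h : ↥(Pᶜ), Fin (d h))
  let x : J → ℝ × ℝ := fun q => pt (β q.1 + ε) (T q.1 (τ q.1 q.2.1 q.2.2))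
  have hcard : Fintype.card J = P.card * ∑ h ∈ Pᶜ, d h := by
    simp only [J, Fintype.card_prod, Fintype.card_coe, Fintype.card_sigma, Fintype.card_fin]
    rw [← Finset.sum_coe_sort (Pᶜ) d]
  rw [← hcard]
  refine card_le_regionCount w β hS x (fun q => hT1 _ q.1.2 _) ?_
  rintro ⟨⟨j, hj⟩, ⟨⟨h, hh⟩, a⟩⟩ ⟨⟨j', hj'⟩, ⟨⟨h', hh'⟩, a'⟩⟩ z hz
  simp only [x, hT2 j hj, hT2 j' hj'] at hz
  have hhP := Finset.mem_compl.1 hh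
  have hhP' := Finset.mem_compl.1 hh'
  have hfl : ∀ k ∈ P, ∀ i ∈ P, ∀ t, pat w β (pt (β k + ε) t) i = ⌊β k - β i⌋ := by
    intro k hk i hi t
    have := hεf k hk i hi
    simp only [pat, hpt]
    rw [ehP i hi, dP i hi, Int.floor_eq_iff]; push_cast; constructor <;> linarith [this.1, this.2]
  have hjj : j = j' := by
    by_contra hne
    have z1 := hz j
    have z2 := hz j'
    rw [hfl j hj j hj, hfl j' hj' j hj, hP j hj] at z1
    rw [hfl j hj j' hj', hfl j' hj' j' hj', hP j' hj'] at z2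
    simp only [sub_self, Int.floor_zero] at z1 z2
    have hsum : ⌊β j - β j'⌋ + ⌊β j' - β j⌋ = 0 := by linarith
    have f1 := Int.floor_le (β j - β j')
    have f2 := Int.floor_le (β j' - β j)
    have hs : ((⌊β j - β j'⌋ : ℤ) : ℝ) + ((⌊β j' - β j⌋ : ℤ) : ℝ) = 0 := by exact_mod_cast hsum
    exact hdist j j' hne (by rw [hP j hj, hP j' hj']) ⌊β j - β j'⌋ (by linarith)
  subst hjj
  -- z is a multiple of u
  have z1 := hz j
  rw [hfl j hj j hj, hfl j hj j hj, hP j hj] at z1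
  simp only at z1
  have hz0 : u.2 * z.1 - u.1 * z.2 = 0 := by linarith
  obtain ⟨k, hk1, hk2⟩ : ∃ k : ℤ, z.1 = k * u.1 ∧ z.2 = k * u.2 := by
    refine ⟨r * z.1 + s * z.2, ?_, ?_⟩
    · linear_combination (-z.1) * hrs + s * hz0
    · linear_combination (-z.2) * hrs - r * hz0
  have hzk : ∀ i, ⌊(β j + ε) * eh i - β i + τ j h a * d i⌋ =
      ⌊(β j + ε) * eh i - β i + (τ j h' a' + k) * d i⌋ := by
    intro i
    have := hz i
    simp only [pat, hpt] at this
    rw [this, ← Int.floor_add_intCast]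
    congr 1
    rw [hk1, hk2, hdR]; push_cast; ring
  have ha := hτ j h a hhP
  have ha' : (β j + ε) * eh h' - β h' + (τ j h' a' + k) * d h' = ((a' + k * d h' : ℤ) : ℝ) := by
    have := hτ j h' a' hhP'
    push_cast; linear_combination this
  have hdp : (0 : ℝ) < d h := by exact_mod_cast hdpos h hhP
  have hdp' : (0 : ℝ) < d h' := by exact_mod_cast hdpos h' hhP'
  have hττ : τ j h a = τ j h' a' + k := by
    rcases lt_trichotomy (τ j h a) (τ j h' a' + k) with hlt | heq | hgt
    · exfalso
      have := hzk h'
      rw [ha', Int.floor_intCast] at this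
      have h2 := Int.floor_le ((β j + ε) * eh h' - β h' + τ j h a * d h')
      rw [this, ← ha'] at h2
      nlinarith
    · exact heq
    · exfalso
      have := hzk h
      rw [ha, Int.floor_natCast] at this
      have h2 := Int.floor_le ((β j + ε) * eh h - β h + (τ j h' a' + k) * d h)
      rw [← this] at h2
      push_cast at h2
      rw [← ha] at h2
      nlinarith
  have hheq : h = h' := by
    by_contra hne
    exact hεb ⟨j, hj, h, h', hhP, hhP', hne, τ j h a, (a : ℕ), a' + k * d h', by
      rw [ha]; simp, by rw [hττ, ha']⟩
  subst hheq
  rw [← hττ, ha] at ha'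
  have haa : ((a : ℕ) : ℤ) = (a' : ℕ) + k * d h := by exact_mod_cast ha'
  have hal := a.2
  have hal' := a'.2
  simp only at hal hal'
  have hk0 : k = 0 := by
    have l1 : ((a : ℕ) : ℤ) < d h := by exact_mod_cast hal
    have l2 : ((a' : ℕ) : ℤ) < d h := by exact_mod_cast hal'
    have l3 : (0 : ℤ) ≤ ((a : ℕ) : ℤ) := by positivity
    have l4 : (0 : ℤ) ≤ ((a' : ℕ) : ℤ) := by positivity
    by_contra hk
    rcases lt_or_gt_of_ne hk with hk | hk
    · nlinarith
    · nlinarith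
  have : a = a' := by
    apply Fin.ext
    rw [hk0] at haa
    simpa using haa
  subst this
  rfl

/-- Determinant of two integer vectors, in absolute value. -/
def adet (v w : ℤ × ℤ) : ℕ := (v.1 * w.2 - v.2 * w.1).natAbs

lemma adet_eq_zero_of_parallel (v w : ℤ × ℤ) (h : Parallel v w) : adet w v = 0 := by
  unfold adet
  rcases h with h | h <;> subst h <;> simp <;> ring

lemma adet_pos_of_not_parallel (v w : ℤ × ℤ) (hv : IsPrimitive v) (hw : IsPrimitive w)
    (h : ¬ Parallel v w) : 0 < adet w v := by
  rw [Nat.pos_iff_ne_zero]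
  intro h0
  unfold adet at h0
  rw [Int.natAbs_eq_zero] at h0
  exact h (prim_parallel w v hw hv h0)

open Classical in
/-- The parallel class of `g`. -/
def cls {n : ℕ} (v : Fin n → ℤ × ℤ) (g : Fin n) : Finset (Fin n) :=
  Finset.univ.filter (fun i => Parallel (v i) (v g))

lemma mem_cls {n : ℕ} (v : Fin n → ℤ × ℤ) (g i : Fin n) :
    i ∈ cls v g ↔ Parallel (v i) (v g) := by
  simp [cls]

lemma isPrimitive_rot (v : ℤ × ℤ) (h : IsPrimitive v) : IsPrimitive (v.2, -v.1) := by
  unfold IsPrimitive at *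
  simp only [Int.gcd_neg]; rw [Int.gcd_comm]; exact h

lemma isPrimitive_neg (v : ℤ × ℤ) (h : IsPrimitive v) : IsPrimitive (-v) := by
  unfold IsPrimitive at *
  simpa using h

lemma dot_neg (w : ℤ × ℤ) (x : ℝ × ℝ) : dot (-w) x = - dot w x := by
  unfold dot; push_cast [Prod.fst_neg, Prod.snd_neg]; ring

open Classical in
lemma arrangement_count {n : ℕ} (b : Fin n → ℝ × ℝ) (v : Fin n → ℤ × ℤ)
    (hA : IsArrangement b v) (g : Fin n) :
    (cls v g).card * ∑ h, adet (v g) (v h) ≤ regionCount (⋃ i, geodesic (b i) (v i)) := by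
  obtain ⟨hprim, hinj⟩ := hA
  have hex : ∀ i, ∃ w : ℤ × ℤ, (w = ((v i).2, -(v i).1) ∨ w = -((v i).2, -(v i).1)) ∧
      (i ∈ cls v g → w = ((v g).2, -(v g).1)) ∧
      (adet (v g) (v i) : ℤ) = w.1 * (v g).1 + w.2 * (v g).2 := by
    intro i
    by_cases hi : i ∈ cls v g
    · refine ⟨((v g).2, -(v g).1), ?_, fun _ => rfl, ?_⟩
      · rcases (mem_cls v g i).1 hi with h | h
        · left; rw [h]
        · right; rw [h]; simp
      · rw [adet_eq_zero_of_parallel _ _ ((mem_cls v g i).1 hi)]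
        simp; ring
    · rcases le_total 0 ((v g).1 * (v i).2 - (v g).2 * (v i).1) with h | h
      · refine ⟨_, Or.inl rfl, fun h => absurd h hi, ?_⟩
        unfold adet
        rw [Int.natAbs_of_nonneg h]; simp only; ring
      · refine ⟨_, Or.inr rfl, fun h => absurd h hi, ?_⟩
        unfold adet
        rw [Int.ofNat_natAbs_of_nonpos h]; simp only [Prod.fst_neg, Prod.snd_neg]; ring
  choose w hw1 hw2 hw3 using hex
  have hgeo : ∀ i x, torusProj x ∈ geodesic (b i) (v i) ↔
      ∃ k : ℤ, dot (w i) x - dot (w i) (b i) = k := by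
    intro i x
    rw [mem_geodesic_iff _ _ (hprim i)]
    rcases hw1 i with h | h
    · rw [h]
    · rw [h, dot_neg, dot_neg]
      constructor
      · rintro ⟨k, hk⟩; exact ⟨-k, by push_cast; linarith⟩
      · rintro ⟨k, hk⟩; exact ⟨-k, by push_cast; linarith⟩
  have hmain := count_le w (fun i => dot (w i) (b i)) (S := ⋃ i, geodesic (b i) (v i))
    (by
      intro x
      rw [Set.mem_iUnion]
      exact exists_congr fun i => hgeo i x)
    (by
      intro i
      rcases hw1 i with h | h <;> rw [h]
      · exact isPrimitive_rot _ (hprim i)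
      · exact isPrimitive_neg _ (isPrimitive_rot _ (hprim i)))
    (by
      intro i i' hne hww k hk
      apply hne
      apply hinj
      ext y
      obtain ⟨x, rfl, -⟩ := torusProj_surj y
      rw [hgeo, hgeo, hww]
      rw [hww] at hk
      constructor
      · rintro ⟨l, hl⟩; exact ⟨l + k, by push_cast; linarith⟩
      · rintro ⟨l, hl⟩; exact ⟨l - k, by push_cast; linarith⟩)
    (cls v g) (v g) (hprim g) hw2 (fun i => adet (v g) (v i)) hw3
    (by
      intro i hi
      exact adet_pos_of_not_parallel _ _ (hprim i) (hprim g) (fun h => hi ((mem_cls v g i).2 h)))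
  refine le_trans (le_of_eq ?_) hmain
  congr 1
  rw [← Finset.sum_add_sum_compl (cls v g)]
  rw [Finset.sum_eq_zero, zero_add]
  intro i hi
  exact adet_eq_zero_of_parallel _ _ ((mem_cls v g i).1 hi)

lemma numeric {n : ℕ} (hn : 0 < n) (v : Fin n → ℤ × ℤ) (hprim : ∀ i, IsPrimitive (v i)) (F : ℝ)
    (hF : ∀ g, (((cls v g).card * ∑ h, adet (v g) (v h) : ℕ) : ℝ) ≤ F)
    (hFn : F ≤ 1 / 16 * (n : ℝ) ^ ((6 : ℝ) / 5)) :
    ∃ g, (n : ℝ) - F / n - 1 ≤ (cls v g).card := by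
  classical
  have : Nonempty (Fin n) := ⟨⟨0, hn⟩⟩
  obtain ⟨g, hg⟩ := Finite.exists_max (fun g => (cls v g).card)
  refine ⟨g, ?_⟩
  set y : ℝ := (n : ℝ) ^ ((1 : ℝ) / 5) with hy
  have hn1 : (1 : ℝ) ≤ n := by exact_mod_cast hn
  have hy1 : 1 ≤ y := Real.one_le_rpow hn1 (by norm_num)
  have hy5 : y ^ 5 = n := by
    rw [hy, ← Real.rpow_natCast, ← Real.rpow_mul (by positivity)]; norm_num
  have hy6 : (n : ℝ) ^ ((6 : ℝ) / 5) = n * y := by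
    rw [hy]
    nth_rewrite 2 [← Real.rpow_one (n : ℝ)]
    rw [← Real.rpow_add (by linarith)]; norm_num
  rw [hy6] at hFn
  have hself : ∀ g, g ∈ cls v g := fun g => (mem_cls v g g).2 (Or.inl rfl)
  have hcle : ∀ g, (cls v g).card ≤ n := fun g => by
    simpa using Finset.card_le_univ (cls v g)
  have hsum : ∀ g, n - (cls v g).card ≤ ∑ h, adet (v g) (v h) := by
    intro g
    have h1 : ∑ h ∈ (cls v g)ᶜ, 1 ≤ ∑ h ∈ (cls v g)ᶜ, adet (v g) (v h) := by
      refine Finset.sum_le_sum fun h hh => ?_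
      refine adet_pos_of_not_parallel _ _ (hprim h) (hprim g) (fun hp => ?_)
      exact Finset.mem_compl.1 hh ((mem_cls v g h).2 hp)
    have h2 : ∑ h ∈ (cls v g)ᶜ, adet (v g) (v h) ≤ ∑ h, adet (v g) (v h) :=
      Finset.sum_le_sum_of_subset (Finset.subset_univ _)
    have h3 : ∑ h ∈ (cls v g)ᶜ, 1 = n - (cls v g).card := by
      simp [Finset.card_compl]
    omega
  have hsumR : ∀ g, (n : ℝ) - (cls v g).card ≤ ((∑ h, adet (v g) (v h) : ℕ) : ℝ) := by
    intro g
    rw [← Nat.cast_sub (hcle g)]; exact_mod_cast hsum g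
  set μ : ℝ := ((cls v g).card : ℝ) with hμ
  have hμ0 : 0 ≤ μ := by positivity
  have hμn : μ ≤ n := by rw [hμ]; exact_mod_cast hcle g
  have hkey : μ * (n - μ) ≤ F := by
    refine le_trans ?_ (hF g)
    push_cast
    have := hsumR g
    push_cast at this
    exact mul_le_mul_of_nonneg_left this hμ0
  have hnpos : (0 : ℝ) < n := by linarith
  rcases le_or_gt ((n : ℝ) / 2) μ with hbig | hsmall
  · -- large class
    have hk : (n - μ) ≤ y / 8 := by
      have : (n : ℝ) * (n - μ) ≤ n * (y / 8) := by nlinarith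
      exact le_of_mul_le_mul_left this hnpos
    have hk2 : (n - μ) * (n - μ) ≤ n := by
      have : (n - μ) * (n - μ) ≤ (y / 8) * (y / 8) :=
        mul_self_le_mul_self (by linarith) hk
      have h5 : y ^ 2 ≤ y ^ 5 := pow_le_pow_right₀ hy1 (by norm_num)
      nlinarith
    have : (n - μ - 1) * n ≤ F := by nlinarith
    have := (le_div_iff₀ hnpos).2 this
    linarith
  · exfalso
    have hm : μ ≤ y / 8 := by
      have : (n : ℝ) * μ ≤ n * (y / 8) := by nlinarith
      exact le_of_mul_le_mul_left this hnpos
    have hDF : ∀ g, ((∑ h, adet (v g) (v h) : ℕ) : ℝ) ≤ n * y / 16 := by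
      intro g
      refine le_trans ?_ ((hF g).trans (by linarith))
      have : 1 ≤ (cls v g).card := Finset.card_pos.2 ⟨g, hself g⟩
      exact_mod_cast Nat.le_mul_of_pos_left _ this
    -- few `h` have large determinant with given `g`
    have hfew : ∀ g, (((Finset.univ.filter (fun h => y / 4 < (adet (v g) (v h) : ℝ))).card : ℕ) : ℝ)
        ≤ n / 4 := by
      intro g
      set A := Finset.univ.filter (fun h => y / 4 < (adet (v g) (v h) : ℝ))
      have h1 : (A.card : ℝ) * (y / 4) ≤ ∑ h ∈ A, (adet (v g) (v h) : ℝ) := by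
        rw [← nsmul_eq_mul]
        refine Finset.card_nsmul_le_sum _ _ _ fun h hh => ?_
        exact (Finset.mem_filter.1 hh).2.le
      have h2 : ∑ h ∈ A, (adet (v g) (v h) : ℝ) ≤ ∑ h, (adet (v g) (v h) : ℝ) :=
        Finset.sum_le_sum_of_subset_of_nonneg (Finset.subset_univ _) (fun _ _ _ => by positivity)
      have h3 := hDF g
      push_cast at h3
      have : (A.card : ℝ) * (y / 4) ≤ (n / 4) * (y / 4) := by linarith
      exact le_of_mul_le_mul_right this (by linarith)
    obtain ⟨g1, hg1⟩ : ∃ g1, g1 ∉ cls v g := by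
      by_contra hcon
      push Not at hcon
      have : cls v g = Finset.univ := Finset.eq_univ_iff_forall.2 hcon
      rw [hμ, this] at hsmall
      simp at hsmall
      linarith
    have hdet := adet_pos_of_not_parallel _ _ (hprim g1) (hprim g)
      (fun h => hg1 ((mem_cls v g g1).2 h))
    have hdet' : (v g).1 * (v g1).2 - (v g).2 * (v g1).1 ≠ 0 := by
      intro h; unfold adet at hdet; rw [h] at hdet; simp at hdet
    set A := Finset.univ.filter (fun h => y / 4 < (adet (v g) (v h) : ℝ)) with hA
    set B := Finset.univ.filter (fun h => y / 4 < (adet (v g1) (v h) : ℝ)) with hB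
    have hgood : (n : ℝ) / 2 ≤ ((A ∪ B)ᶜ.card : ℝ) := by
      have h1 : ((A ∪ B).card : ℝ) ≤ A.card + B.card := by exact_mod_cast Finset.card_union_le A B
      have h2 : (((A ∪ B).card + (A ∪ B)ᶜ.card : ℕ) : ℝ) = n := by
        rw [Finset.card_add_card_compl]; simp
      push_cast at h2
      have := hfew g
      have := hfew g1
      linarith
    let N : ℤ := ⌊y / 4⌋
    have hN0 : 0 ≤ N := Int.floor_nonneg.2 (by linarith)
    let φ : Fin n → ℤ × ℤ := fun h =>
      ((v g).1 * (v h).2 - (v g).2 * (v h).1, (v g1).1 * (v h).2 - (v g1).2 * (v h).1)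
    have habs : ∀ p q : ℤ × ℤ, ¬ (y / 4 < (adet p q : ℝ)) →
        p.1 * q.2 - p.2 * q.1 ∈ Finset.Icc (-N) N := by
      intro p q h
      rw [not_lt] at h
      have h' : (((adet p q : ℕ) : ℤ) : ℝ) ≤ y / 4 := by exact_mod_cast h
      have := Int.le_floor.2 h'
      unfold adet at this
      rw [Int.natCast_natAbs] at this
      exact Finset.mem_Icc.2 (abs_le.1 this)
    have hmaps : ∀ h ∈ (A ∪ B)ᶜ, φ h ∈ Finset.Icc (-N) N ×ˢ Finset.Icc (-N) N := by
      intro h hh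
      simp only [hA, hB, Finset.mem_compl, Finset.mem_union, Finset.mem_filter, Finset.mem_univ,
        true_and, not_or] at hh
      exact Finset.mem_product.2 ⟨habs _ _ hh.1, habs _ _ hh.2⟩
    have hfib : ∀ c ∈ Finset.Icc (-N) N ×ˢ Finset.Icc (-N) N,
        (((A ∪ B)ᶜ).filter (fun h => φ h = c)).card ≤ (cls v g).card := by
      intro c _
      rcases (((A ∪ B)ᶜ).filter (fun h => φ h = c)).eq_empty_or_nonempty with he | ⟨h0, hh0⟩
      · rw [he]; simp
      · refine le_trans (Finset.card_le_card (t := cls v h0) ?_) (hg h0)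
        intro h hh
        have e1 := (Finset.mem_filter.1 hh).2
        have e0 := (Finset.mem_filter.1 hh0).2
        rw [← e0] at e1
        simp only [φ, Prod.mk.injEq] at e1
        rw [mem_cls]
        left
        ext
        · apply mul_left_cancel₀ hdet'
          linear_combination (v g1).1 * e1.1 - (v g).1 * e1.2
        · apply mul_left_cancel₀ hdet'
          linear_combination (v g1).2 * e1.1 - (v g).2 * e1.2
    have hcnt := Finset.card_le_mul_card_image_of_maps_to hmaps _ hfib
    rw [Finset.card_product, Int.card_Icc] at hcnt
    have hNc : (((N + 1 - -N).toNat : ℕ) : ℝ) ≤ 3 / 2 * y := by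
      have h1 : (((N + 1 - -N).toNat : ℕ) : ℤ) = 2 * N + 1 := by
        rw [Int.toNat_of_nonneg (by linarith)]; ring
      have h2 : (((N + 1 - -N).toNat : ℕ) : ℝ) = 2 * N + 1 := by exact_mod_cast h1
      rw [h2]
      have : (N : ℝ) ≤ y / 4 := Int.floor_le _
      linarith
    set K : ℝ := (((N + 1 - -N).toNat : ℕ) : ℝ) with hK
    have hK0 : 0 ≤ K := by positivity
    have hcntR : (((A ∪ B)ᶜ.card : ℕ) : ℝ) ≤ μ * (K * K) := by rw [hμ, hK]; exact_mod_cast hcnt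
    have hKK : K * K ≤ (3 / 2 * y) * (3 / 2 * y) := mul_self_le_mul_self hK0 hNc
    have : μ * (K * K) ≤ (y / 8) * ((3 / 2 * y) * (3 / 2 * y)) :=
      mul_le_mul hm hKK (by positivity) (by linarith)
    have h35 : y ^ 3 ≤ y ^ 5 := pow_le_pow_right₀ hy1 (by norm_num)
    have h3 : 1 ≤ y ^ 3 := one_le_pow₀ hy1
    nlinarith

end TorusArr

/-- There is `c > 0` such that if `f ≤ c·n^{6/5}`, then the maximal number `m`
of pairwise parallel geodesics satisfies `m ≥ n - f/n + O(1)`. -/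
theorem stmt10 :
    ∃ c > (0 : ℝ), ∃ C : ℝ, ∀ (n : ℕ) (b : Fin n → ℝ × ℝ) (v : Fin n → ℤ × ℤ),
      IsArrangement b v →
      (regionCount (⋃ i, geodesic (b i) (v i)) : ℝ) ≤ c * (n : ℝ) ^ ((6 : ℝ) / 5) →
      ∀ m : ℕ,
        m = sSup {k : ℕ | ∃ S : Finset (Fin n), S.card = k ∧
          ∀ i ∈ S, ∀ j ∈ S, Parallel (v i) (v j)} →
        (m : ℝ) ≥ (n : ℝ) - (regionCount (⋃ i, geodesic (b i) (v i)) : ℝ) / (n : ℝ) - C := by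
  refine ⟨1 / 16, by norm_num, 1, ?_⟩
  intro n b v hA hF m hm
  rcases Nat.eq_zero_or_pos n with h0 | hn
  · subst h0
    have : (0 : ℝ) ≤ m := by positivity
    simp; linarith
  obtain ⟨g, hg⟩ := TorusArr.numeric hn v hA.1 _
    (fun g => by exact_mod_cast TorusArr.arrangement_count b v hA g) hF
  refine ge_iff_le.2 (hg.trans ?_)
  have : (TorusArr.cls v g).card ≤ m := by
    rw [hm]
    refine le_csSup ⟨n, ?_⟩ ⟨TorusArr.cls v g, rfl, ?_⟩
    · rintro k ⟨S, rfl, -⟩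
      simpa using Finset.card_le_univ S
    · intro i hi j hj
      rw [TorusArr.mem_cls] at hi hj
      unfold Parallel at *
      rcases hi with hi | hi <;> rcases hj with hj | hj <;> rw [hi, hj] <;> simp
  exact_mod_cast this
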